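/- Theorem 2 (degree inequality under deletion of the color-0 edges): for D ≥ 3 and any (D+1)-tuple σ of permutations of {1,…,k}, the degree of σ is at least D times the degree of its D-bubble, i.e. ω(σ) ≥ D·ω(σ_D); equivalently, in terms of face and component counts, (D−1)·( D(D−1)/2 · k + D·C(σ) − F(σ) ) ≥ D·( (D−1)(D−2)/2 · k + (D−1)·C_D(σ_D) − F_D(σ_D) ). -/

import Mathlib

/-- Number of cycles of a permutation counting fixed points: the number of orbits
on `Fin k` of the cyclic group generated by `τ`. -/
noncomputable def cycleCount {k : ℕ} (τ : Equiv.Perm (Fin k)) : ℕ :=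
  Nat.card (MulAction.orbitRel.Quotient (Subgroup.zpowers τ) (Fin k))

/-- Total number of faces of the `(D+1)`-colored graph encoded by `σ`:
`F(σ) = Σ_{c₁ < c₂} c(σ⁽ᶜ¹⁾ ∘ (σ⁽ᶜ²⁾)⁻¹)`. -/
noncomputable def faceCount {k D : ℕ} (σ : Fin (D + 1) → Equiv.Perm (Fin k)) : ℕ :=
  ∑ p ∈ Finset.univ.filter (fun p : Fin (D + 1) × Fin (D + 1) => p.1 < p.2),
    cycleCount (σ p.1 * (σ p.2)⁻¹)

/-- Number of connected components of the `(D+1)`-colored graph encoded by `σ`: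
the number of orbits on `Fin k` of the subgroup generated by `(σ⁽⁰⁾)⁻¹ ∘ σ⁽ᶜ⁾`, `1 ≤ c ≤ D`. -/
noncomputable def compCount {k D : ℕ} (σ : Fin (D + 1) → Equiv.Perm (Fin k)) : ℕ :=
  Nat.card (MulAction.orbitRel.Quotient
    (Subgroup.closure
      {g : Equiv.Perm (Fin k) | ∃ c : Fin (D + 1), c ≠ 0 ∧ g = (σ 0)⁻¹ * σ c}) (Fin k))

/-- Number of faces of the `D`-bubble (colors `1,…,D`) of `σ`:
`F_D(σ_D) = Σ_{1 ≤ c₁ < c₂ ≤ D} c(σ⁽ᶜ¹⁾ ∘ (σ⁽ᶜ²⁾)⁻¹)`. -/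
noncomputable def bubbleFaceCount {k D : ℕ} (σ : Fin (D + 1) → Equiv.Perm (Fin k)) : ℕ :=
  ∑ p ∈ Finset.univ.filter
      (fun p : Fin (D + 1) × Fin (D + 1) => 0 < p.1 ∧ p.1 < p.2),
    cycleCount (σ p.1 * (σ p.2)⁻¹)

/-- Number of connected components of the `D`-bubble of `σ`: the number of orbits
on `Fin k` of the subgroup generated by `(σ⁽¹⁾)⁻¹ ∘ σ⁽ᶜ⁾`, `2 ≤ c ≤ D`. -/
noncomputable def bubbleCompCount {k D : ℕ} (σ : Fin (D + 1) → Equiv.Perm (Fin k)) : ℕ :=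
  Nat.card (MulAction.orbitRel.Quotient
    (Subgroup.closure
      {g : Equiv.Perm (Fin k) | ∃ c : Fin (D + 1), 1 < c ∧ g = (σ 1)⁻¹ * σ c}) (Fin k))

/-!
The number of orbits of a permutation group `G` on `α` is the dimension of the space of
`G`-invariant functions `α → ℚ`, so inequalities between orbit counts are inequalities between
dimensions. If `u * v` fixes `f`, then `f ∘ u - f` is orthogonal to all functions fixed by `u` and
to all functions fixed by `v`, and it vanishes only if `u` and `v` both fix `f`. Rank-nullity
turns this into the nonnegativity of the genus of the hypermap `(u, v, u * v)`, and the dimension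
formula for sums of subspaces into submodularity of orbit counts.

Applied to the permutations `u = σ₀⁻¹ σₐ` and `v = σₐ⁻¹ σ_b`, the two facts together show that each
pair of colors `0 < a < b` has a nonnegative defect
`k + c(σₐ σ_b⁻¹) + 2 C(σ) - c(σ₀ σₐ⁻¹) - c(σ₀ σ_b⁻¹) - 2 C_D(σ_D)`. The right side of the
theorem exceeds the left side by the sum of these defects.
-/

open MulAction Subgroup Module Finset

section Orbits

variable {α : Type*}

/-- The number of orbits of a group of permutations. It is the common form of the cycle and
component counts of a colored graph, which are all orbit counts of suitable groups. -/
noncomputable def orbitCount (G : Subgroup (Equiv.Perm α)) : ℕ :=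
  Nat.card (orbitRel.Quotient G α)

/-- The space of rational functions invariant under a group of permutations. Its dimension is the
number of orbits. -/
def invariantFunctions (G : Subgroup (Equiv.Perm α)) : Submodule ℚ (α → ℚ) where
  carrier := {f | ∀ g ∈ G, f ∘ g = f}
  add_mem' {f₁ f₂} h₁ h₂ g hg := by rw [Pi.add_comp, h₁ g hg, h₂ g hg]
  zero_mem' _ _ := rfl
  smul_mem' r f hf g hg := by rw [Pi.smul_comp, hf g hg]

lemma invariantFunctions_eq_range (G : Subgroup (Equiv.Perm α)) :
    invariantFunctions G =
      LinearMap.range (LinearMap.funLeft ℚ ℚ (Quotient.mk'' : α → orbitRel.Quotient G α)) := by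
  ext f
  constructor
  · intro hf
    refine ⟨Quotient.lift f ?_, rfl⟩
    rintro _ b ⟨g, rfl⟩
    exact congrFun (hf g g.2) b
  · rintro ⟨q, rfl⟩ g hg
    funext a
    exact congrArg q (Quotient.sound ⟨⟨g, hg⟩, rfl⟩)

lemma mem_invariantFunctions_closure {S : Set (Equiv.Perm α)} {f : α → ℚ} :
    f ∈ invariantFunctions (closure S) ↔ ∀ g ∈ S, f ∘ g = f := by
  refine ⟨fun hf g hg => hf g (subset_closure hg), fun hf g hg => ?_⟩
  induction hg using closure_induction with
  | mem g hg => exact hf g hg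
  | one => rfl
  | mul g h _ _ ihg ihh => rw [Equiv.Perm.coe_mul, ← Function.comp_assoc, ihg, ihh]
  | inv g _ ih =>
    nth_rw 1 [← ih]
    rw [Function.comp_assoc, ← Equiv.Perm.coe_mul, mul_inv_cancel, Equiv.Perm.coe_one,
      Function.comp_id]

lemma mem_invariantFunctions_zpowers {g : Equiv.Perm α} {f : α → ℚ} :
    f ∈ invariantFunctions (zpowers g) ↔ f ∘ g = f := by
  simp only [zpowers_eq_closure, mem_invariantFunctions_closure, Set.mem_singleton_iff, forall_eq]

lemma invariantFunctions_antitone :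
    Antitone (invariantFunctions : Subgroup (Equiv.Perm α) → Submodule ℚ (α → ℚ)) :=
  fun _ _ h _ hf g hg => hf g (h hg)

lemma invariantFunctions_sup (G H : Subgroup (Equiv.Perm α)) :
    invariantFunctions (G ⊔ H) = invariantFunctions G ⊓ invariantFunctions H := by
  ext f
  rw [sup_eq_closure, mem_invariantFunctions_closure]
  exact ⟨fun hf => ⟨fun g hg => hf g (.inl hg), fun g hg => hf g (.inr hg)⟩,
    fun hf g hg => hg.elim (hf.1 g) (hf.2 g)⟩

lemma mem_invariantFunctions_sup_of_mul {u v : Equiv.Perm α} {f : α → ℚ}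
    (hf : f ∈ invariantFunctions (zpowers (u * v))) (hu : f ∘ u = f) :
    f ∈ invariantFunctions (zpowers u ⊔ zpowers v) := by
  rw [mem_invariantFunctions_zpowers, Equiv.Perm.coe_mul, ← Function.comp_assoc, hu] at hf
  rw [invariantFunctions_sup]
  exact ⟨mem_invariantFunctions_zpowers.2 hu, mem_invariantFunctions_zpowers.2 hf⟩

section Finite

variable [Finite α]

lemma finrank_invariantFunctions (G : Subgroup (Equiv.Perm α)) :
    finrank ℚ (invariantFunctions G) = orbitCount G := by
  have := Fintype.ofFinite (orbitRel.Quotient G α)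
  rw [invariantFunctions_eq_range, LinearMap.finrank_range_of_inj
    (LinearMap.funLeft_injective_of_surjective _ _ _ Quotient.mk''_surjective),
    finrank_fintype_fun_eq_card, orbitCount, Nat.card_eq_fintype_card]

lemma orbitCount_antitone : Antitone (orbitCount : Subgroup (Equiv.Perm α) → ℕ) := by
  intro G H h
  simpa only [finrank_invariantFunctions] using
    Submodule.finrank_mono (invariantFunctions_antitone h)

lemma orbitCount_add_le_inf_add_sup (G H : Subgroup (Equiv.Perm α)) :
    orbitCount G + orbitCount H ≤ orbitCount (G ⊓ H) + orbitCount (G ⊔ H) := by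
  simp only [← finrank_invariantFunctions]
  rw [invariantFunctions_sup, ← Submodule.finrank_sup_add_finrank_inf_eq]
  gcongr
  exact Submodule.finrank_mono <|
    sup_le (invariantFunctions_antitone inf_le_left) (invariantFunctions_antitone inf_le_right)

lemma orbitCount_zpowers_mul_comm (g h : Equiv.Perm α) :
    orbitCount (zpowers (g * h)) = orbitCount (zpowers (h * g)) := by
  have hle (g h : Equiv.Perm α) :
      orbitCount (zpowers (g * h)) ≤ orbitCount (zpowers (h * g)) := by
    rw [← finrank_invariantFunctions, ← finrank_invariantFunctions,
      ← (LinearEquiv.funCongrLeft ℚ ℚ g).finrank_map_eq]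
    refine Submodule.finrank_mono ?_
    rintro _ ⟨f, hf, rfl⟩
    exact mem_invariantFunctions_zpowers.2
      (congrArg (· ∘ g) (mem_invariantFunctions_zpowers.1 hf))
  exact (hle g h).antisymm (hle h g)

end Finite

section Genus

variable [Fintype α]

lemma comp_sub_self_dotProduct_eq_zero {g : Equiv.Perm α} {p : α → ℚ} (hp : p ∘ g = p)
    (f : α → ℚ) : (f ∘ g - f) ⬝ᵥ p = 0 := by
  rw [sub_dotProduct, sub_eq_zero]
  nth_rw 1 [← hp]
  exact comp_equiv_dotProduct_comp_equiv f p g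

lemma comp_sub_self_dotProduct_eq_zero_of_mem_sup {u v : Equiv.Perm α} {f p : α → ℚ}
    (hf : f ∈ invariantFunctions (zpowers (u * v)))
    (hp : p ∈ invariantFunctions (zpowers u) ⊔ invariantFunctions (zpowers v)) :
    (f ∘ u - f) ⬝ᵥ p = 0 := by
  obtain ⟨p₁, hp₁, p₂, hp₂, rfl⟩ := Submodule.mem_sup.1 hp
  rw [mem_invariantFunctions_zpowers] at hf hp₁ hp₂
  have hv : f ∘ u - f = -((f ∘ u) ∘ v - f ∘ u) := by
    rw [Function.comp_assoc, ← Equiv.Perm.coe_mul, hf, neg_sub]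
  rw [dotProduct_add, comp_sub_self_dotProduct_eq_zero hp₁, hv, neg_dotProduct,
    comp_sub_self_dotProduct_eq_zero hp₂, neg_zero, add_zero]

lemma orbitCount_zpowers_mul_add_finrank_sup_le (u v : Equiv.Perm α) :
    orbitCount (zpowers (u * v)) +
        finrank ℚ ↥(invariantFunctions (zpowers u) ⊔ invariantFunctions (zpowers v)) ≤
      Fintype.card α + orbitCount (zpowers u ⊔ zpowers v) := by
  let T : invariantFunctions (zpowers (u * v)) →ₗ[ℚ] α → ℚ :=
    (LinearMap.funLeft ℚ ℚ u - LinearMap.id).domRestrict _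
  have hdisjoint : Disjoint (LinearMap.range T)
      (invariantFunctions (zpowers u) ⊔ invariantFunctions (zpowers v)) := by
    rw [Submodule.disjoint_def]
    rintro _ ⟨f, rfl⟩ hp
    exact dotProduct_self_eq_zero.1 (comp_sub_self_dotProduct_eq_zero_of_mem_sup f.2 hp)
  have hker : (LinearMap.ker T).map (Submodule.subtype _) ≤
      invariantFunctions (zpowers u ⊔ zpowers v) := by
    rintro _ ⟨f, hf, rfl⟩
    exact mem_invariantFunctions_sup_of_mul f.2 (sub_eq_zero.1 (LinearMap.mem_ker.1 hf))
  have hrange := Submodule.finrank_add_finrank_le_of_disjoint hdisjoint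
  have hkernel := Submodule.finrank_mono hker
  have hrank := T.finrank_range_add_finrank_ker
  rw [finrank_fintype_fun_eq_card] at hrange
  rw [Submodule.finrank_map_subtype_eq, finrank_invariantFunctions] at hkernel
  rw [finrank_invariantFunctions] at hrank
  lia

lemma orbitCount_zpowers_genus_nonneg (u v : Equiv.Perm α) :
    orbitCount (zpowers u) + orbitCount (zpowers v) + orbitCount (zpowers (u * v)) ≤
      Fintype.card α + 2 * orbitCount (zpowers u ⊔ zpowers v) := by
  have hmul := orbitCount_zpowers_mul_add_finrank_sup_le u v
  have hsup := Submodule.finrank_sup_add_finrank_inf_eq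
    (invariantFunctions (zpowers u)) (invariantFunctions (zpowers v))
  rw [← invariantFunctions_sup] at hsup
  simp only [finrank_invariantFunctions] at hsup
  lia

lemma orbitCount_zpowers_add_le_of_mem {H : Subgroup (Equiv.Perm α)} {v : Equiv.Perm α}
    (hv : v ∈ H) (u : Equiv.Perm α) :
    orbitCount (zpowers u) + orbitCount (zpowers (u * v)) + 2 * orbitCount H ≤
      Fintype.card α + orbitCount (zpowers v) + 2 * orbitCount (H ⊔ zpowers u) := by
  have hvH : zpowers v ≤ H := zpowers_le.2 hv
  have hsub := orbitCount_add_le_inf_add_sup H (zpowers u ⊔ zpowers v)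
  have hinf : orbitCount (H ⊓ (zpowers u ⊔ zpowers v)) ≤ orbitCount (zpowers v) :=
    orbitCount_antitone (le_inf hvH le_sup_right)
  have hsup : H ⊔ (zpowers u ⊔ zpowers v) = H ⊔ zpowers u := by
    rw [sup_comm (zpowers u), ← sup_assoc, sup_eq_left.2 hvH]
  rw [hsup] at hsub
  have hgenus := orbitCount_zpowers_genus_nonneg u v
  lia

end Genus

end Orbits

section Pairs

variable {ι : Type*} [LinearOrder ι]

lemma sum_offDiag_filter_lt_add {M : Type*} [AddCommMonoid M] (s : Finset ι) (g : ι → M) :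
    ∑ p ∈ s.offDiag with p.1 < p.2, (g p.1 + g p.2) = (#s - 1) • ∑ a ∈ s, g a := by
  have hswap : ∑ p ∈ s.offDiag with p.1 < p.2, g p.2 =
      ∑ p ∈ s.offDiag with ¬ p.1 < p.2, g p.1 :=
    sum_nbij' Prod.swap Prod.swap (by grind) (by grind) (by simp) (by simp) (by simp)
  calc ∑ p ∈ s.offDiag with p.1 < p.2, (g p.1 + g p.2)
      = ∑ p ∈ s.offDiag, g p.1 := by
        rw [sum_add_distrib, hswap, sum_filter_add_sum_filter_not]
    _ = ∑ a ∈ s, ∑ _b ∈ s.erase a, g a :=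
        sum_finset_product _ _ _ fun p => by
          rw [mem_offDiag, mem_erase, ne_comm, and_comm (a := _ ≠ _)]
    _ = ∑ a ∈ s, (#s - 1) • g a :=
        sum_congr rfl fun a ha => by rw [sum_const, card_erase_of_mem ha]
    _ = (#s - 1) • ∑ a ∈ s, g a := (smul_sum ..).symm

lemma card_offDiag_filter_lt (s : Finset ι) : #{p ∈ s.offDiag | p.1 < p.2} = (#s).choose 2 := by
  have h := sum_offDiag_filter_lt_add s fun _ => 1
  simp only [sum_const, smul_eq_mul, mul_one] at h
  rw [Nat.choose_two_right, mul_comm, ← h]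
  lia

end Pairs

lemma two_mul_cast_choose_two (n : ℕ) : 2 * (n.choose 2 : ℤ) = n * (n - 1) := by
  qify
  rw [Nat.cast_choose_two]
  ring

section ColoredGraph

variable {k D : ℕ} (σ : Fin (D + 1) → Equiv.Perm (Fin k))

/-- The group whose orbits on the white vertices are the connected components of the `D`-bubble. -/
def bubbleGroup : Subgroup (Equiv.Perm (Fin k)) :=
  closure {g | ∃ c : Fin (D + 1), 1 < c ∧ g = (σ 1)⁻¹ * σ c}

/-- The number of faces of a colored graph that contain edges of color `0`, i.e. the faces lost when
these edges are deleted. -/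
noncomputable def zeroFaceCount : ℕ :=
  ∑ a ∈ Ioi 0, cycleCount (σ 0 * (σ a)⁻¹)

/-- The pairs of distinct colors of the `D`-bubble, over which its faces are counted. Each pair is
listed once, in increasing order. -/
def bubbleColorPairs (D : ℕ) : Finset (Fin (D + 1) × Fin (D + 1)) :=
  {p ∈ (Ioi 0).offDiag | p.1 < p.2}

lemma mem_bubbleColorPairs {p : Fin (D + 1) × Fin (D + 1)} :
    p ∈ bubbleColorPairs D ↔ 0 < p.1 ∧ p.1 < p.2 := by
  simp only [bubbleColorPairs, mem_filter, mem_offDiag, mem_Ioi]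
  exact ⟨fun h => ⟨h.1.1, h.2⟩, fun h => ⟨⟨h.1, h.1.trans h.2, h.2.ne⟩, h.2⟩⟩

lemma card_bubbleColorPairs (D : ℕ) : #(bubbleColorPairs D) = D.choose 2 := by
  rw [bubbleColorPairs, card_offDiag_filter_lt, Fin.card_Ioi, Fin.val_zero]
  rfl

lemma sum_bubbleColorPairs_add (g : Fin (D + 1) → ℕ) :
    ∑ p ∈ bubbleColorPairs D, (g p.1 + g p.2) = (D - 1) * ∑ a ∈ Ioi 0, g a := by
  rw [bubbleColorPairs, sum_offDiag_filter_lt_add, Fin.card_Ioi, Fin.val_zero, smul_eq_mul]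
  rfl

lemma bubbleFaceCount_eq_sum :
    bubbleFaceCount σ = ∑ p ∈ bubbleColorPairs D, cycleCount (σ p.1 * (σ p.2)⁻¹) :=
  sum_congr (Finset.ext fun p => by simp [mem_bubbleColorPairs]) fun _ _ => rfl

lemma faceCount_eq_zeroFaceCount_add_bubbleFaceCount :
    faceCount σ = zeroFaceCount σ + bubbleFaceCount σ := by
  have hbubble : bubbleFaceCount σ =
      ∑ a : Fin D, ∑ b, if a.succ < b then cycleCount (σ a.succ * (σ b)⁻¹) else 0 := by
    rw [bubbleFaceCount, sum_filter, Fintype.sum_prod_type, Fin.sum_univ_succ]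
    simp
  rw [hbubble, zeroFaceCount, ← filter_lt_eq_Ioi, sum_filter, faceCount, sum_filter,
    Fintype.sum_prod_type, Fin.sum_univ_succ]

lemma cycleCount_mul_inv (g h : Equiv.Perm (Fin k)) :
    cycleCount (g * h⁻¹) = orbitCount (zpowers (g⁻¹ * h)) := by
  rw [← zpowers_inv, mul_inv_rev, inv_inv]
  exact orbitCount_zpowers_mul_comm g h⁻¹

lemma inv_mul_mem_bubbleGroup {a b : Fin (D + 1)} (ha : 0 < a) (hb : 0 < b) :
    (σ a)⁻¹ * σ b ∈ bubbleGroup σ := by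
  have hone {c : Fin (D + 1)} (hc : 0 < c) : (σ 1)⁻¹ * σ c ∈ bubbleGroup σ := by
    rcases (Fin.one_le_of_ne_zero hc.ne').eq_or_lt with h | h
    · rw [← h, inv_mul_cancel]
      exact one_mem _
    · exact subset_closure ⟨c, h, rfl⟩
  simpa only [mul_inv_rev, inv_inv, mul_assoc, mul_inv_cancel_left] using
    mul_mem (inv_mem (hone ha)) (hone hb)

lemma orbitCount_bubbleGroup_sup_le_compCount {a : Fin (D + 1)} (ha : 0 < a) :
    orbitCount (bubbleGroup σ ⊔ zpowers ((σ 0)⁻¹ * σ a)) ≤ compCount σ := by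
  refine orbitCount_antitone ((closure_le _).2 ?_)
  rintro _ ⟨c, hc, rfl⟩
  rw [← mul_inv_cancel_left (σ a) (σ c), ← mul_assoc]
  exact mul_mem (mem_sup_right (mem_zpowers _))
    (mem_sup_left (inv_mul_mem_bubbleGroup σ ha (Fin.pos_of_ne_zero hc)))

lemma cycleCount_add_cycleCount_le {a b : Fin (D + 1)} (ha : 0 < a) (hb : 0 < b) :
    cycleCount (σ 0 * (σ a)⁻¹) + cycleCount (σ 0 * (σ b)⁻¹) + 2 * bubbleCompCount σ ≤
      k + cycleCount (σ a * (σ b)⁻¹) + 2 * compCount σ := by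
  have hgenus := orbitCount_zpowers_add_le_of_mem (inv_mul_mem_bubbleGroup σ ha hb) ((σ 0)⁻¹ * σ a)
  rw [mul_assoc, mul_inv_cancel_left, Fintype.card_fin] at hgenus
  simp only [cycleCount_mul_inv]
  have hbubble : orbitCount (bubbleGroup σ) = bubbleCompCount σ := rfl
  have hcomp := orbitCount_bubbleGroup_sup_le_compCount σ ha
  lia

lemma zeroFaceCount_add_bubbleCompCount_le :
    (D - 1) * zeroFaceCount σ + D.choose 2 * (2 * bubbleCompCount σ) ≤
      D.choose 2 * k + bubbleFaceCount σ + D.choose 2 * (2 * compCount σ) := by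
  have h : ∑ p ∈ bubbleColorPairs D, (cycleCount (σ 0 * (σ p.1)⁻¹) +
        cycleCount (σ 0 * (σ p.2)⁻¹) + 2 * bubbleCompCount σ) ≤
      ∑ p ∈ bubbleColorPairs D, (k + cycleCount (σ p.1 * (σ p.2)⁻¹) + 2 * compCount σ) := by
    refine sum_le_sum fun p hp => ?_
    obtain ⟨h₁, h₂⟩ := mem_bubbleColorPairs.1 hp
    exact cycleCount_add_cycleCount_le σ h₁ (h₁.trans h₂)
  rw [sum_add_distrib, sum_bubbleColorPairs_add fun a => cycleCount (σ 0 * (σ a)⁻¹),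
    sum_add_distrib, sum_add_distrib, ← bubbleFaceCount_eq_sum] at h
  simpa only [zeroFaceCount, sum_const, card_bubbleColorPairs, smul_eq_mul] using h

end ColoredGraph

theorem degree_inequality_general (k D : ℕ) (σ : Fin (D + 1) → Equiv.Perm (Fin k)) :
    (D : ℤ) * (((D - 1) * (D - 2) / 2 : ℕ) * k + (D - 1 : ℤ) * bubbleCompCount σ
        - (bubbleFaceCount σ : ℤ)) ≤
      (D - 1 : ℤ) * (((D * (D - 1) / 2 : ℕ) : ℤ) * k + D * compCount σ
        - (faceCount σ : ℤ)) := by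
  rcases D with _ | n
  · simp
  have hchoose : (n + 1 - 1) * (n + 1 - 2) / 2 = n.choose 2 := (Nat.choose_two_right n).symm
  have hsucc : (n + 1).choose 2 = n + n.choose 2 := by
    rw [Nat.choose_succ_succ', Nat.choose_one_right]
  have htwo := two_mul_cast_choose_two n
  have hdefect := zeroFaceCount_add_bubbleCompCount_le σ
  rw [faceCount_eq_zeroFaceCount_add_bubbleFaceCount, hchoose, ← Nat.choose_two_right, hsucc]
  rw [Nat.add_sub_cancel, hsucc] at hdefect
  zify at hdefect
  push_cast
  linear_combination hdefect + (k + compCount σ - bubbleCompCount σ : ℤ) * htwo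

/-- Theorem 2 (degree inequality under deletion of the color-0 edges), stated in terms of
face and component counts: `ω(σ) ≥ D·ω(σ_D)` is equivalent to
`(D−1)·(D(D−1)/2·k + D·C(σ) − F(σ)) ≥ D·((D−1)(D−2)/2·k + (D−1)·C_D(σ_D) − F_D(σ_D))`. -/
theorem degree_inequality (k D : ℕ) (hk : 1 ≤ k) (hD : 3 ≤ D)
    (σ : Fin (D + 1) → Equiv.Perm (Fin k)) :
    (D : ℤ) * (((D - 1) * (D - 2) / 2 : ℕ) * k + (D - 1 : ℤ) * bubbleCompCount σ
        - (bubbleFaceCount σ : ℤ)) ≤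
      (D - 1 : ℤ) * (((D * (D - 1) / 2 : ℕ) : ℤ) * k + D * compCount σ
        - (faceCount σ : ℤ)) :=
  degree_inequality_general k D σ
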